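/- Let G = (V,E) be a finite connected undirected unweighted graph with m edges. For any two vertices i and j, the hitting time of the simple random walk satisfies h_{ij} = m·R_{ij} + (1/2)·Σ_{k∈V} deg(k)·(R_{jk} − R_{ik}), where R_{ab} denotes the effective resistance between a and b and deg(k) is the degree of vertex k. -/

import Mathlib

open Finset

variable {V : Type*}

/-- The total weight incident to a vertex: `ω(i) = Σ_l ω(i,l)`. -/
noncomputable def vWeight [Fintype V] (w : V → V → ℝ) (i : V) : ℝ :=
  ∑ l, w i l

/-- The total weight of the graph (each edge counted once): `ω(G)`. -/
noncomputable def gWeight [Fintype V] (w : V → V → ℝ) : ℝ :=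
  (∑ i, ∑ l, w i l) / 2

/-- Transition probabilities of the random walk on the weighted graph:
from `i`, move to `l` with probability `ω(i,l)/ω(i)`. -/
noncomputable def walkStep [Fintype V] (w : V → V → ℝ) (i l : V) : ℝ :=
  w i l / vWeight w i

/-- `w` is a system of positive symmetric edge weights on a finite connected undirected
graph: symmetric, nonnegative, zero on the diagonal (and on non-edges), and the graph
whose edges are the pairs with positive weight is connected. -/
def IsWeight [Fintype V] (w : V → V → ℝ) : Prop :=
  (∀ a b, w a b = w b a) ∧ (∀ a b, 0 ≤ w a b) ∧ (∀ a, w a a = 0) ∧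
    (∀ a b, Relation.ReflTransGen (fun x y => 0 < w x y) a b)

/-- `hitSurv p j n i` is the probability that the Markov chain with transition kernel `p`
started at `i` has not visited `j` at any of the times `0, 1, …, n`. -/
noncomputable def hitSurv {S : Type*} [Fintype S] [DecidableEq S] (p : S → S → ℝ) (j : S) :
    ℕ → S → ℝ
  | 0 => fun i => if i = j then 0 else 1
  | n + 1 => fun i => if i = j then 0 else ∑ l, p i l * hitSurv p j n l

/-- Expected hitting time of `j` from `i`: the expected number of steps for the chain
started at `i` to first reach `j`, computed as `Σ_n P(T_j > n)`. -/
noncomputable def hitTime {S : Type*} [Fintype S] [DecidableEq S] (p : S → S → ℝ)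
    (i j : S) : ℝ :=
  ∑' n : ℕ, hitSurv p j n i

/-- A unit-current potential from `i` to `j`: Kirchhoff's equations when a unit current
enters at `i` and leaves at `j`. -/
def IsUnitPotential [Fintype V] (w : V → V → ℝ) (i j : V) (φ : V → ℝ) : Prop :=
  (∀ k, k ≠ i → k ≠ j → ∑ l, w k l * (φ k - φ l) = 0) ∧
    (∑ l, w i l * (φ i - φ l) = 1) ∧
    (∑ l, w j l * (φ j - φ l) = -1)

/-- `R` is the effective-resistance matrix of the weighted graph `w`:
`R a a = 0`, and for `a ≠ b`, `R a b = V_a - V_b` for a unit-current potential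
from `a` to `b`. -/
def IsResistance [Fintype V] (w : V → V → ℝ) (R : V → V → ℝ) : Prop :=
  (∀ a, R a a = 0) ∧
    ∀ a b, a ≠ b → ∃ φ, IsUnitPotential w a b φ ∧ R a b = φ a - φ b

/-- The weight function of an unweighted graph: weight `1` on edges, `0` elsewhere. -/
noncomputable def aw (G : SimpleGraph V) [DecidableRel G.Adj] (a b : V) : ℝ :=
  if G.Adj a b then 1 else 0

/-- Probability of a given trajectory: `trajProb p i xs` is the probability that the
chain started at `i` successively visits the vertices of the list `xs`. -/
noncomputable def trajProb {S : Type*} [Fintype S] (p : S → S → ℝ) : S → List S → ℝ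
  | _, [] => 1
  | i, x :: xs => p i x * trajProb p x xs

/-- Probability that the walk started at `i` has not visited every vertex by time `n`. -/
noncomputable def notCoveredProb [Fintype V] [DecidableEq V] (p : V → V → ℝ) (n : ℕ)
    (i : V) : ℝ :=
  ∑ xs : Fin n → V, trajProb p i (List.ofFn xs) *
    (if (i :: List.ofFn xs).toFinset = Finset.univ then 0 else 1)

/-- The cover time from `i`: the expected number of steps for the walk started at `i`
to have visited every vertex, computed as `Σ_n P(T_cov > n)`. -/
noncomputable def coverTime [Fintype V] [DecidableEq V] (p : V → V → ℝ) (i : V) : ℝ :=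
  ∑' n : ℕ, notCoveredProb p n i

/-- `visitSurv p j k n i` is the probability that the chain started at `i` is at `k` at
time `n` without having visited `j` at any of the times `0, …, n`. -/
noncomputable def visitSurv [Fintype V] [DecidableEq V] (p : V → V → ℝ) (j k : V) :
    ℕ → V → ℝ
  | 0 => fun i => if i = j then 0 else if i = k then 1 else 0
  | n + 1 => fun i => if i = j then 0 else ∑ l, p i l * visitSurv p j k n l

/-- `expVisits p i j k` is the expected number of visits to `k` (counting time `0`) of
the chain started at `i` strictly before its first visit to `j`. -/
noncomputable def expVisits [Fintype V] [DecidableEq V] (p : V → V → ℝ) (i j k : V) : ℝ :=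
  ∑' n : ℕ, visitSurv p j k n i

/-- `reachBeforeAux p i j n l` is the probability that the walk started at `l` reaches `j`
within `n` steps without visiting `i` first. -/
noncomputable def reachBeforeAux [Fintype V] [DecidableEq V] (p : V → V → ℝ) (i j : V) :
    ℕ → V → ℝ
  | 0 => fun l => if l = j then 1 else 0
  | n + 1 => fun l =>
      if l = j then 1 else if l = i then 0 else ∑ m, p l m * reachBeforeAux p i j n m

/-- The probability that the walk started at `i` reaches `j` before returning to `i`:
one step from `i` to `l`, then reach `j` before `i` (monotone limit in `n`). -/
noncomputable def escapeProb [Fintype V] [DecidableEq V] (p : V → V → ℝ) (i j : V) : ℝ :=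
  ∑ l, p i l * ⨆ n, reachBeforeAux p i j n l

/-- `hitSurvSet p F n x` is the probability that the chain started at `x` has not visited
the set `F` at any of the times `0, …, n`. -/
noncomputable def hitSurvSet {S : Type*} [Fintype S] (p : S → S → ℝ) (F : S → Prop)
    [DecidablePred F] : ℕ → S → ℝ
  | 0 => fun x => if F x then 0 else 1
  | n + 1 => fun x => if F x then 0 else ∑ y, p x y * hitSurvSet p F n y

/-- Expected hitting time of the set `F` from `x`, computed as `Σ_n P(T_F > n)`. -/
noncomputable def hitTimeSet {S : Type*} [Fintype S] (p : S → S → ℝ) (F : S → Prop)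
    [DecidablePred F] (x : S) : ℝ :=
  ∑' n : ℕ, hitSurvSet p F n x

/-- The associated chain `𝒢` on pairs `(P, i)` (visited set, current vertex): from
`(P, i)` it moves to `(P ∪ {j}, j)` with probability `ω(i,j)/ω(i)`. -/
noncomputable def pairStep [Fintype V] [DecidableEq V] (w : V → V → ℝ)
    (s t : Finset V × V) : ℝ :=
  if t.1 = insert t.2 s.1 then walkStep w s.2 t.2 else 0

/-- `exitProbAux p P j n i` is the probability that the walk started at `i` leaves `P`
within `n` steps and that the first vertex visited outside `P` is `j`. -/
noncomputable def exitProbAux [Fintype V] [DecidableEq V] (p : V → V → ℝ) (P : Finset V)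
    (j : V) : ℕ → V → ℝ
  | 0 => fun i => if i ∈ P then 0 else if i = j then 1 else 0
  | n + 1 => fun i =>
      if i ∈ P then ∑ l, p i l * exitProbAux p P j n l else if i = j then 1 else 0

/-- The probability that the first vertex outside `P` visited by the walk started at `i`
is `j` (monotone limit in the number of allowed steps). -/
noncomputable def exitProb [Fintype V] [DecidableEq V] (p : V → V → ℝ) (P : Finset V)
    (i j : V) : ℝ :=
  ⨆ n, exitProbAux p P j n i

/-- The negated weighted Laplacian `Δ` of the weighted graph `w` on `Fin n`. -/
noncomputable def negLaplacian (n : ℕ) (w : Fin n → Fin n → ℝ) :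
    Matrix (Fin n) (Fin n) ℝ :=
  Matrix.of fun k l => if k = l then -(∑ m, w k m) else w k l

/-- `Δ₂`: the negated weighted Laplacian with its first row replaced by the first row of
the identity matrix. -/
noncomputable def delta2 (n : ℕ) (hn : 0 < n) (w : Fin n → Fin n → ℝ) :
    Matrix (Fin n) (Fin n) ℝ :=
  (negLaplacian n w).updateRow ⟨0, hn⟩ (fun l => if l = ⟨0, hn⟩ then 1 else 0)

/-- The weight function obtained from `w` by adding weight `u` on the edge `{a, b}`. -/
noncomputable def addEdge [DecidableEq V] (w : V → V → ℝ) (a b : V) (u : ℝ)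
    (x y : V) : ℝ :=
  w x y + (if (x = a ∧ y = b) ∨ (x = b ∧ y = a) then u else 0)

/-!
Write `L` for the weighted Laplacian and `e_a` for the indicator of `a`. The hitting times
`h = h_{·j}` satisfy `L h = ω` off `j` and `h j = 0`. If `φ_k` solves `L φ_k = e_k - e_j`, then
superposition gives `h_{ij} = ∑ₖ ω(k) (φ_k i - φ_k j)`. Since `L` is self-adjoint, the potentials
are reciprocal, and polarization gives `2 (φ_k i - φ_k j) = R_{ij} + R_{kj} - R_{ik}`; summing over
`k` yields the formula.
-/

section HittingTime

variable {S : Type*} [Fintype S] [DecidableEq S] {p : S → S → ℝ} {j : S} {h : S → ℝ} {C : ℝ}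

theorem hitSurv_self (p : S → S → ℝ) (j : S) (n : ℕ) : hitSurv p j n j = 0 := by
  cases n <;> simp [hitSurv]

theorem hitSurv_succ_of_ne {k : S} (hk : k ≠ j) (n : ℕ) :
    hitSurv p j (n + 1) k = ∑ l, p k l * hitSurv p j n l :=
  if_neg hk

theorem hitSurv_nonneg (hp : ∀ a b, 0 ≤ p a b) (j : S) (n : ℕ) (i : S) :
    0 ≤ hitSurv p j n i := by
  induction n generalizing i with
  | zero => simp only [hitSurv]; split_ifs <;> norm_num
  | succ n ih =>
    rcases eq_or_ne i j with rfl | hi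
    · exact (hitSurv_self p i (n + 1)).ge
    · rw [hitSurv_succ_of_ne hi]
      exact Finset.sum_nonneg fun l _ => mul_nonneg (hp i l) (ih l)

theorem sub_sum_range_succ_hitSurv {k : S} (hk : k ≠ j)
    (hstep : h k = 1 + ∑ l, p k l * h l) (N : ℕ) :
    h k - ∑ n ∈ range (N + 1), hitSurv p j n k =
      ∑ l, p k l * (h l - ∑ n ∈ range N, hitSurv p j n l) := by
  have hzero : hitSurv p j 0 k = 1 := if_neg hk
  have hshift : ∑ n ∈ range N, hitSurv p j (n + 1) k =
      ∑ l, p k l * ∑ n ∈ range N, hitSurv p j n l := by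
    simp only [hitSurv_succ_of_ne hk, Finset.mul_sum]
    exact Finset.sum_comm
  rw [Finset.sum_range_succ', hzero, hshift, hstep]
  simp only [mul_sub, Finset.sum_sub_distrib]
  ring

theorem sum_range_hitSurv_le (hp : ∀ a b, 0 ≤ p a b) (hnonneg : ∀ k, 0 ≤ h k)
    (hstep : ∀ k, k ≠ j → h k = 1 + ∑ l, p k l * h l) (N : ℕ) (k : S) :
    ∑ n ∈ range N, hitSurv p j n k ≤ h k := by
  induction N generalizing k with
  | zero => simpa using hnonneg k
  | succ N ih =>
    rcases eq_or_ne k j with rfl | hk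
    · simpa [hitSurv_self] using hnonneg k
    · rw [← sub_nonneg, sub_sum_range_succ_hitSurv hk (hstep k hk)]
      exact Finset.sum_nonneg fun l _ => mul_nonneg (hp k l) (sub_nonneg.2 (ih l))

/-- For a Markov chain the left-hand side is the expectation of `h` at time `N` on the event that
`j` has not been visited before time `N`. -/
theorem sub_sum_range_hitSurv_le (hp : ∀ a b, 0 ≤ p a b) (hj : h j = 0)
    (hstep : ∀ k, k ≠ j → h k = 1 + ∑ l, p k l * h l) (hC : ∀ k, h k ≤ C) (N : ℕ) (k : S) :
    h k - ∑ n ∈ range N, hitSurv p j n k ≤ C * hitSurv p j N k := by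
  induction N generalizing k with
  | zero =>
    rcases eq_or_ne k j with rfl | hk
    · simp [hitSurv, hj]
    · simpa [hitSurv, hk] using hC k
  | succ N ih =>
    rcases eq_or_ne k j with rfl | hk
    · simp [hitSurv_self, hj]
    · rw [sub_sum_range_succ_hitSurv hk (hstep k hk), hitSurv_succ_of_ne hk, Finset.mul_sum]
      refine Finset.sum_le_sum fun l _ => ?_
      calc p k l * (h l - ∑ n ∈ range N, hitSurv p j n l)
          ≤ p k l * (C * hitSurv p j N l) := mul_le_mul_of_nonneg_left (ih l) (hp k l)
        _ = C * (p k l * hitSurv p j N l) := mul_left_comm _ _ _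

theorem hasSum_hitSurv (hp : ∀ a b, 0 ≤ p a b) (hnonneg : ∀ k, 0 ≤ h k) (hj : h j = 0)
    (hstep : ∀ k, k ≠ j → h k = 1 + ∑ l, p k l * h l) (i : S) :
    HasSum (fun n => hitSurv p j n i) (h i) := by
  have hbound (N : ℕ) : ∑ n ∈ range N, hitSurv p j n i ≤ h i :=
    sum_range_hitSurv_le hp hnonneg hstep N i
  have hsummable : Summable fun n => hitSurv p j n i :=
    summable_of_sum_range_le (fun n => hitSurv_nonneg hp j n i) hbound
  have hmax (k : S) : h k ≤ ∑ l, h l :=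
    Finset.single_le_sum (fun l _ => hnonneg l) (Finset.mem_univ k)
  have hlower (N : ℕ) :
      h i - (∑ l, h l) * hitSurv p j N i ≤ ∑ n ∈ range N, hitSurv p j n i :=
    sub_le_comm.1 (sub_sum_range_hitSurv_le hp hj hstep hmax N i)
  rw [hsummable.hasSum_iff_tendsto_nat]
  refine tendsto_of_tendsto_of_tendsto_of_le_of_le ?_ tendsto_const_nhds hlower hbound
  simpa using (hsummable.tendsto_atTop_zero.const_mul (∑ l, h l)).const_sub (h i)

end HittingTime

section Weight

variable [Fintype V] {w : V → V → ℝ} {j k : V}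

theorem vWeight_nonneg (hnonneg : ∀ a b, 0 ≤ w a b) (k : V) : 0 ≤ vWeight w k :=
  Finset.sum_nonneg fun l _ => hnonneg k l

theorem vWeight_pos_of_reflTransGen (hnonneg : ∀ a b, 0 ≤ w a b)
    (hpath : Relation.ReflTransGen (fun x y => 0 < w x y) k j) (hkj : k ≠ j) :
    0 < vWeight w k := by
  obtain rfl | ⟨l, hl, -⟩ := hpath.cases_head
  · exact absurd rfl hkj
  · exact Finset.sum_pos' (fun x _ => hnonneg k x) ⟨l, mem_univ l, hl⟩

theorem sum_vWeight (w : V → V → ℝ) : ∑ k, vWeight w k = 2 * gWeight w :=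
  (mul_div_cancel₀ _ two_ne_zero).symm

end Weight

section Laplacian

variable [Fintype V] [DecidableEq V] {w : V → V → ℝ} {f g φ : V → ℝ} {a b c d j k : V}

/-- The Laplacian matrix `D - W` of the weighted graph `w`, the weighted analogue of
`SimpleGraph.lapMatrix`. Loops contribute `0`, since they cancel in `D - W`. -/
noncomputable def weightLapMatrix (w : V → V → ℝ) : Matrix V V ℝ :=
  Matrix.diagonal (vWeight w) - Matrix.of w

theorem weightLapMatrix_mulVec_apply (w : V → V → ℝ) (f : V → ℝ) (k : V) :
    (weightLapMatrix w).mulVec f k = ∑ l, w k l * (f k - f l) := by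
  rw [weightLapMatrix, Matrix.sub_mulVec, Pi.sub_apply, Matrix.mulVec_diagonal]
  simp only [vWeight, Matrix.mulVec, dotProduct, Matrix.of_apply, mul_sub,
    Finset.sum_sub_distrib, Finset.sum_mul]

theorem isSymm_weightLapMatrix (hsymm : ∀ a b, w a b = w b a) : (weightLapMatrix w).IsSymm :=
  (Matrix.isSymm_diagonal _).sub (Matrix.IsSymm.ext fun a b => hsymm b a)

theorem weightLapMatrix_mulVec_eq_vWeight_mul (hk : vWeight w k ≠ 0) :
    (weightLapMatrix w).mulVec f k = vWeight w k * (f k - ∑ l, walkStep w k l * f l) := by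
  have hmean : vWeight w k * ∑ l, walkStep w k l * f l = ∑ l, w k l * f l := by
    rw [Finset.mul_sum]
    exact Finset.sum_congr rfl fun l _ => by rw [walkStep, ← mul_assoc, mul_div_cancel₀ _ hk]
  rw [weightLapMatrix_mulVec_apply, mul_sub, hmean]
  simp only [vWeight, mul_sub, Finset.sum_sub_distrib, Finset.sum_mul]

theorem eq_of_forall_le_of_weightLapMatrix_mulVec_nonneg (hnonneg : ∀ a b, 0 ≤ w a b)
    (hmin : ∀ z, f a ≤ f z) (hf : 0 ≤ (weightLapMatrix w).mulVec f a) (hab : 0 < w a b) :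
    f b = f a := by
  rw [weightLapMatrix_mulVec_apply] at hf
  have hterm : ∀ l ∈ univ, w a l * (f a - f l) ≤ 0 := fun l _ =>
    mul_nonpos_of_nonneg_of_nonpos (hnonneg a l) (sub_nonpos.2 (hmin l))
  have hzero : w a b * (f a - f b) = 0 :=
    (Finset.sum_eq_zero_iff_of_nonpos hterm).1 (le_antisymm (Finset.sum_nonpos hterm) hf)
      b (mem_univ b)
  exact (sub_eq_zero.1 ((mul_eq_zero.1 hzero).resolve_left hab.ne')).symm

theorem le_of_weightLapMatrix_mulVec_nonneg (hnonneg : ∀ a b, 0 ≤ w a b)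
    (hconn : ∀ a, Relation.ReflTransGen (fun x y => 0 < w x y) a j)
    (hf : ∀ k, k ≠ j → 0 ≤ (weightLapMatrix w).mulVec f k) (k : V) : f j ≤ f k := by
  have : Nonempty V := ⟨j⟩
  obtain ⟨x, hx⟩ := Finite.exists_min f
  -- The property of minimizing `f` propagates along a path from `x` until the path meets `j`.
  induction hconn x using Relation.ReflTransGen.head_induction_on with
  | refl => exact hx k
  | @head a b hab _ ih =>
    rcases eq_or_ne a j with rfl | haj
    · exact hx k
    · have hba : f b = f a :=
        eq_of_forall_le_of_weightLapMatrix_mulVec_nonneg hnonneg hx (hf a haj) hab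
      exact ih fun z => hba.trans_le (hx z)

theorem hitTime_walkStep_eq (hnonneg : ∀ a b, 0 ≤ w a b)
    (hconn : ∀ a, Relation.ReflTransGen (fun x y => 0 < w x y) a j) (hj : f j = 0)
    (hf : ∀ k, k ≠ j → (weightLapMatrix w).mulVec f k = vWeight w k) (i : V) :
    hitTime (walkStep w) i j = f i := by
  have hstep_nonneg (a b : V) : 0 ≤ walkStep w a b :=
    div_nonneg (hnonneg a b) (vWeight_nonneg hnonneg a)
  have hf_nonneg (k : V) : 0 ≤ f k := hj ▸
    le_of_weightLapMatrix_mulVec_nonneg hnonneg hconn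
      (fun k hk => (hf k hk).symm ▸ vWeight_nonneg hnonneg k) k
  refine (hasSum_hitSurv hstep_nonneg hf_nonneg hj (fun k hk => ?_) i).tsum_eq
  have hpos : vWeight w k ≠ 0 := (vWeight_pos_of_reflTransGen hnonneg (hconn k) hk).ne'
  have hmean := hf k hk
  rw [weightLapMatrix_mulVec_eq_vWeight_mul hpos, mul_eq_left₀ hpos] at hmean
  exact sub_eq_iff_eq_add.1 hmean

theorem potential_reciprocity (hsymm : ∀ a b, w a b = w b a)
    (hf : (weightLapMatrix w).mulVec f = Pi.single a 1 - Pi.single b 1)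
    (hg : (weightLapMatrix w).mulVec g = Pi.single c 1 - Pi.single d 1) :
    g a - g b = f c - f d := by
  calc g a - g b = (weightLapMatrix w).mulVec f ⬝ᵥ g := by simp [hf, sub_dotProduct]
    _ = f ⬝ᵥ (weightLapMatrix w).mulVec g := by
      rw [Matrix.dotProduct_mulVec, ← Matrix.mulVec_transpose, isSymm_weightLapMatrix hsymm]
    _ = f c - f d := by simp [hg, dotProduct_sub]

theorem IsUnitPotential.weightLapMatrix_mulVec (hφ : IsUnitPotential w a b φ) (hab : a ≠ b) :
    (weightLapMatrix w).mulVec φ = Pi.single a 1 - Pi.single b 1 := by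
  obtain ⟨hφ_off, hφ_source, hφ_sink⟩ := hφ
  funext k
  rw [weightLapMatrix_mulVec_apply]
  rcases eq_or_ne k a with rfl | hka
  · simpa [hab] using hφ_source
  rcases eq_or_ne k b with rfl | hkb
  · simpa [hka] using hφ_sink
  · simpa [hka, hkb] using hφ_off k hka hkb

variable {R : V → V → ℝ}

theorem IsResistance.exists_potential (hR : IsResistance w R) (a b : V) :
    ∃ φ, (weightLapMatrix w).mulVec φ = Pi.single a 1 - Pi.single b 1 ∧ R a b = φ a - φ b := by
  rcases eq_or_ne a b with rfl | hab
  · exact ⟨0, by simp, by simp [hR.1]⟩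
  · obtain ⟨φ, hφ, hRφ⟩ := hR.2 a b hab
    exact ⟨φ, hφ.weightLapMatrix_mulVec hab, hRφ⟩

theorem IsResistance.eq_potential_sub (hsymm : ∀ a b, w a b = w b a) (hR : IsResistance w R)
    (hφ : (weightLapMatrix w).mulVec φ = Pi.single a 1 - Pi.single b 1) :
    R a b = φ a - φ b := by
  obtain ⟨ψ, hψ, hRψ⟩ := hR.exists_potential a b
  exact hRψ.trans (potential_reciprocity hsymm hφ hψ)

omit [DecidableEq V] in
theorem IsResistance.symm (hsymm : ∀ a b, w a b = w b a) (hR : IsResistance w R) (a b : V) :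
    R a b = R b a := by
  classical
  obtain ⟨φ, hφ, hRφ⟩ := hR.exists_potential a b
  have hneg : (weightLapMatrix w).mulVec (-φ) = Pi.single b 1 - Pi.single a 1 := by
    rw [Matrix.mulVec_neg, hφ, neg_sub]
  rw [hRφ, hR.eq_potential_sub hsymm hneg, Pi.neg_apply, Pi.neg_apply, neg_sub_neg]

theorem IsResistance.potential_sub_eq (hsymm : ∀ a b, w a b = w b a) (hR : IsResistance w R)
    (hφ : (weightLapMatrix w).mulVec φ = Pi.single a 1 - Pi.single b 1) (x : V) :
    φ x - φ b = (R x b + R a b - R x a) / 2 := by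
  obtain ⟨ψ, hψ, hRψ⟩ := hR.exists_potential x b
  have hdiff : (weightLapMatrix w).mulVec (ψ - φ) = Pi.single x 1 - Pi.single a 1 := by
    rw [Matrix.mulVec_sub, hψ, hφ, sub_sub_sub_cancel_right]
  have hRdiff : R x a = (ψ x - φ x) - (ψ a - φ a) := hR.eq_potential_sub hsymm hdiff
  have hrecip : ψ a - ψ b = φ x - φ b := potential_reciprocity hsymm hφ hψ
  linarith [hR.eq_potential_sub hsymm hφ]

theorem hitTime_walkStep_eq_sum_potential (hnonneg : ∀ a b, 0 ≤ w a b)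
    (hconn : ∀ a, Relation.ReflTransGen (fun x y => 0 < w x y) a j) {φ : V → V → ℝ}
    (hφ : ∀ k, (weightLapMatrix w).mulVec (φ k) = Pi.single k 1 - Pi.single j 1) (i : V) :
    hitTime (walkStep w) i j = ∑ k, vWeight w k * (φ k i - φ k j) := by
  refine hitTime_walkStep_eq (f := fun x => ∑ k, vWeight w k * (φ k x - φ k j))
    hnonneg hconn (by simp only [sub_self, mul_zero, Finset.sum_const_zero]) (fun x hx => ?_) i
  calc (weightLapMatrix w).mulVec (fun x => ∑ k, vWeight w k * (φ k x - φ k j)) x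
      = ∑ k, vWeight w k * (weightLapMatrix w).mulVec (φ k) x := by
        simp only [weightLapMatrix_mulVec_apply, ← Finset.sum_sub_distrib, ← mul_sub,
          sub_sub_sub_cancel_right, Finset.mul_sum]
        rw [Finset.sum_comm]
        exact Finset.sum_congr rfl fun k _ => Finset.sum_congr rfl fun l _ =>
          mul_left_comm _ _ _
    _ = vWeight w x := by simp [hφ, hx, Pi.single_apply]

theorem tetali_hitting_time_formula_general (hsymm : ∀ a b, w a b = w b a)
    (hnonneg : ∀ a b, 0 ≤ w a b)
    (hconn : ∀ a b, Relation.ReflTransGen (fun x y => 0 < w x y) a b)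
    (hR : IsResistance w R) (i j : V) :
    hitTime (walkStep w) i j =
      gWeight w * R i j + (1 / 2) * ∑ k, vWeight w k * (R j k - R i k) := by
  choose φ hφ _ using fun k => hR.exists_potential k j
  calc hitTime (walkStep w) i j
      = ∑ k, vWeight w k * (φ k i - φ k j) :=
        hitTime_walkStep_eq_sum_potential hnonneg (hconn · j) hφ i
    _ = ∑ k, vWeight w k * ((R i j + R j k - R i k) / 2) := by
        simp only [hR.potential_sub_eq hsymm (hφ _), hR.symm hsymm j]
    _ = (1 / 2) * ((∑ k, vWeight w k) * R i j + ∑ k, vWeight w k * (R j k - R i k)) := by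
        rw [Finset.sum_mul, ← Finset.sum_add_distrib, Finset.mul_sum]
        exact Finset.sum_congr rfl fun k _ => by ring
    _ = gWeight w * R i j + (1 / 2) * ∑ k, vWeight w k * (R j k - R i k) := by
        rw [sum_vWeight]
        ring

end Laplacian

section UnitWeights

variable (G : SimpleGraph V) [DecidableRel G.Adj]

theorem aw_comm (a b : V) : aw G a b = aw G b a := by
  simp only [aw, G.adj_comm]

theorem aw_nonneg (a b : V) : 0 ≤ aw G a b :=
  ite_nonneg zero_le_one le_rfl

theorem aw_pos_iff {a b : V} : 0 < aw G a b ↔ G.Adj a b := by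
  by_cases hab : G.Adj a b <;> simp [aw, hab]

variable {G} in
theorem reflTransGen_aw_pos (hG : G.Preconnected) (a b : V) :
    Relation.ReflTransGen (fun x y => 0 < aw G x y) a b := by
  simpa only [aw_pos_iff] using (SimpleGraph.reachable_iff_reflTransGen a b).1 (hG a b)

variable [Fintype V]

theorem vWeight_aw (k : V) : vWeight (aw G) k = G.degree k := by
  simp [vWeight, aw, ← SimpleGraph.card_neighborFinset_eq_degree,
    SimpleGraph.neighborFinset_eq_filter]

theorem gWeight_aw [Fintype G.edgeSet] : gWeight (aw G) = G.edgeFinset.card := by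
  have hdeg : ∑ k, G.degree k = 2 * G.edgeFinset.card := by
    classical convert G.sum_degrees_eq_twice_card_edges
  have hsum : ∑ k, vWeight (aw G) k = 2 * (G.edgeFinset.card : ℝ) := by
    simp only [vWeight_aw]
    exact_mod_cast hdeg
  exact mul_left_cancel₀ two_ne_zero ((sum_vWeight _).symm.trans hsum)

end UnitWeights

/-- Tetali's formula on an unweighted connected graph:
`h_{ij} = m·R_{ij} + (1/2)·Σ_k deg(k)·(R_{jk} − R_{ik})`. -/
theorem tetali_hitting_time_formula
    {V : Type*} [Fintype V] [DecidableEq V] (G : SimpleGraph V) [DecidableRel G.Adj]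
    (hG : G.Connected) (R : V → V → ℝ) (hR : IsResistance (aw G) R) (i j : V) :
    hitTime (walkStep (aw G)) i j =
      (G.edgeFinset.card : ℝ) * R i j +
        (1 / 2) * ∑ k, (G.degree k : ℝ) * (R j k - R i k) := by
  rw [← gWeight_aw, tetali_hitting_time_formula_general (aw_comm G) (aw_nonneg G)
    (reflTransGen_aw_pos hG.preconnected) hR]
  simp only [vWeight_aw]
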